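/- arXiv:1807.00497 — 2 statements merged into one kernel-verified Lean document; each statement's English description precedes it below -/
import Mathlib

section
/- Let v₊, v₋ ∈ ℝ^{n+2} be null vectors with ζ := ⟨v₊,v₋⟩ > 0. Then for every s ∈ ℝ one has exp(−s·(v₋∧v₊)) = (id − (v₊v₋* + v₋v₊*)/ζ) + e^{−sζ}·(v₊v₋*)/ζ + e^{sζ}·(v₋v₊*)/ζ. -/
open scoped BigOperators Topology
open Filter Set MeasureTheory

noncomputable section

abbrev E (n : ℕ) := EuclideanSpace ℝ (Fin (n + 2))

/-- Minkowski inner product of signature (n+1,1). -/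
def mink {n : ℕ} (x y : E n) : ℝ :=
  ∑ i, (if i = Fin.last (n + 1) then (-1 : ℝ) else 1) * x i * y i

variable {n : ℕ}

lemma mink_comm (x y : E n) : mink x y = mink y x :=
  Finset.sum_congr rfl fun i _ => by ring

lemma mink_add_right (v x y : E n) : mink v (x + y) = mink v x + mink v y := by
  simp [mink, mul_add, Finset.sum_add_distrib]

lemma mink_smul_right (v : E n) (c : ℝ) (x : E n) : mink v (c • x) = c * mink v x := by
  unfold mink
  rw [Finset.mul_sum]
  refine Finset.sum_congr rfl fun i _ => ?_
  simp only [PiLp.smul_apply, smul_eq_mul]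
  ring

lemma mink_add_left (x y v : E n) : mink (x + y) v = mink x v + mink y v := by
  rw [mink_comm, mink_add_right, mink_comm v x, mink_comm v y]

lemma mink_smul_left (c : ℝ) (x v : E n) : mink (c • x) v = c * mink x v := by
  rw [mink_comm, mink_smul_right, mink_comm v x]

/-- `v ∧ w` as an endomorphism: `x ↦ ⟨v,x⟩ w − ⟨w,x⟩ v`. -/
def wedge {n : ℕ} (v w : E n) : E n →L[ℝ] E n :=
  LinearMap.toContinuousLinearMap
    { toFun := fun x => mink v x • w - mink w x • v
      map_add' := by
        intro x y
        simp only [mink_add_right, add_smul]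
        abel
      map_smul' := by
        intro c x
        simp only [mink_smul_right, RingHom.id_apply, mul_smul, smul_sub] }

/-- rank one endomorphism `vw* : x ↦ ⟨x,w⟩ v`. -/
def rankOne {n : ℕ} (v w : E n) : E n →L[ℝ] E n :=
  LinearMap.toContinuousLinearMap
    { toFun := fun x => mink x w • v
      map_add' := by
        intro x y
        simp only [mink_add_left, add_smul]
      map_smul' := by
        intro c x
        simp only [mink_smul_left, RingHom.id_apply, mul_smul] }

/-- The exponential of a multiple of an idempotent in a real Banach algebra. -/
lemma exp_smul_of_isIdempotentElem {A : Type*} [NormedRing A] [NormedAlgebra ℝ A]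
    [CompleteSpace A] {p : A} (hp : IsIdempotentElem p) (a : ℝ) :
    NormedSpace.exp (a • p) = 1 - p + Real.exp a • p := by
  have hexp : HasSum (fun k : ℕ => ((k.factorial : ℝ)⁻¹ • a ^ k) • p) (Real.exp a • p) := by
    rw [Real.exp_eq_exp_ℝ]
    exact (NormedSpace.exp_series_hasSum_exp' (𝕂 := ℝ) a).smul_const p
  refine (NormedSpace.exp_series_hasSum_exp' (𝕂 := ℝ) (a • p)).unique ?_
  convert (hasSum_ite_eq (0 : ℕ) (1 - p)).add hexp using 2 with k
  rcases k with _ | k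
  · simp
  · simp [smul_pow, hp.pow_succ_eq, smul_smul]

/-- The exponential of a combination of two orthogonal idempotents in a real Banach algebra. -/
lemma exp_smul_add_smul_of_orthogonal {A : Type*} [NormedRing A] [NormedAlgebra ℝ A]
    [CompleteSpace A] {p q : A} (hp : IsIdempotentElem p) (hq : IsIdempotentElem q)
    (hpq : p * q = 0) (hqp : q * p = 0) (a b : ℝ) :
    NormedSpace.exp (a • p + b • q) = 1 - (p + q) + Real.exp a • p + Real.exp b • q := by
  have hcomm : Commute p q := hpq.trans hqp.symm
  let := NormedAlgebra.restrictScalars ℚ ℝ A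
  rw [NormedSpace.exp_add_of_commute ((hcomm.smul_left a).smul_right b),
    exp_smul_of_isIdempotentElem hp, exp_smul_of_isIdempotentElem hq]
  simp only [mul_add, add_mul, mul_sub, sub_mul, smul_mul_assoc, mul_smul_comm, hpq, mul_one,
    one_mul, smul_zero, sub_zero, add_zero]
  abel

lemma smul_rankOne_mul_smul_rankOne_apply (a b : ℝ) (v w x y z : E n) :
    ((a • rankOne v w) * (b • rankOne x y)) z = (a * b * mink x w) • rankOne v y z := by
  change a • mink (b • mink z y • x) w • v = (a * b * mink x w) • mink z y • v
  simp only [mink_smul_left, smul_smul]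
  congr 1
  ring

lemma wedge_eq_rankOne_sub_rankOne (v w : E n) : wedge v w = rankOne w v - rankOne v w := by
  ext1 x
  change mink v x • w - mink w x • v = mink x v • w - mink x w • v
  rw [mink_comm v, mink_comm w]

lemma isIdempotentElem_inv_smul_rankOne {v w : E n} (h : mink v w ≠ 0) :
    IsIdempotentElem ((mink v w)⁻¹ • rankOne v w) := by
  ext1 z
  rw [smul_rankOne_mul_smul_rankOne_apply, mul_assoc, inv_mul_cancel₀ h, mul_one]
  rfl

lemma smul_rankOne_mul_smul_rankOne_eq_zero (a b : ℝ) {w x : E n} (v y : E n)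
    (h : mink x w = 0) : (a • rankOne v w) * (b • rankOne x y) = 0 := by
  ext1 z
  rw [smul_rankOne_mul_smul_rankOne_apply, h, mul_zero, zero_smul]
  rfl

/-- Proposition 3.1, Minkowski case: explicit exponential formula. -/
theorem stmt0 {n : ℕ} (vp vm : E n)
    (hvp : mink vp vp = 0) (hvm : mink vm vm = 0)
    (hζ : 0 < mink vp vm) (s : ℝ) :
    NormedSpace.exp ((-s) • wedge vm vp) =
      (1 - (mink vp vm)⁻¹ • (rankOne vp vm + rankOne vm vp))
        + Real.exp (-(s * mink vp vm)) • (mink vp vm)⁻¹ • rankOne vp vm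
        + Real.exp (s * mink vp vm) • (mink vp vm)⁻¹ • rankOne vm vp := by
  have hne : mink vp vm ≠ 0 := hζ.ne'
  have hp := isIdempotentElem_inv_smul_rankOne hne
  have hq := isIdempotentElem_inv_smul_rankOne (mink_comm vp vm ▸ hne)
  rw [mink_comm vm vp] at hq
  rw [smul_add, ← exp_smul_add_smul_of_orthogonal hp hq
    (smul_rankOne_mul_smul_rankOne_eq_zero _ _ _ _ hvm)
    (smul_rankOne_mul_smul_rankOne_eq_zero _ _ _ _ hvp),
    wedge_eq_rankOne_sub_rankOne]
  congr 1
  rw [smul_smul, smul_smul, neg_mul, mul_assoc, mul_inv_cancel₀ hne, mul_one, smul_sub, neg_smul,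
    neg_smul, sub_neg_eq_add]
end
end

section
/- Let v, w ∈ ℝ^{n+2} with v∧w ≠ 0 be such that the Minkowski inner product restricted to the plane span{v,w} is positive definite. Then: (i) there is a constant B with ‖exp(s·(v∧w))‖ ≤ B for all s ∈ ℝ; and (ii) for every p > 0, the map (0,∞) ∋ t ↦ exp(−ln(t/p)·(v∧w)) has no limit as t → 0⁺. -/
open scoped BigOperators Topology
open Filter Set MeasureTheory

noncomputable section

variable {n : ℕ}

/-- The Rodrigues rotation formula in a Banach algebra. -/
lemma exp_smul_of_pow_three_eq {𝔸 : Type*} [NormedRing 𝔸] [NormedAlgebra ℝ 𝔸] [CompleteSpace 𝔸]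
    {a : 𝔸} {θ : ℝ} (hθ : θ ≠ 0) (ha : a ^ 3 = -(θ ^ 2) • a) (s : ℝ) :
    NormedSpace.exp (s • a) =
      1 + (Real.sin (θ * s) / θ) • a + ((1 - Real.cos (θ * s)) / θ ^ 2) • a ^ 2 := by
  let G : ℝ → 𝔸 := fun s =>
    1 + (Real.sin (θ * s) / θ) • a + ((1 - Real.cos (θ * s)) / θ ^ 2) • a ^ 2
  have hG (s : ℝ) : HasDerivAt G (a * G s) s := by
    have hlin : HasDerivAt (fun s : ℝ => θ * s) θ s := by
      simpa using (hasDerivAt_id s).const_mul θ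
    have h₁ := ((hlin.sin.div_const θ).smul_const a).const_add 1
    have h₂ := ((hlin.cos.const_sub 1).div_const (θ ^ 2)).smul_const (a ^ 2)
    refine (h₁.add h₂).congr_deriv ?_
    have hmul : a * a ^ 2 = -(θ ^ 2) • a := by rw [← ha]; exact (pow_succ' a 2).symm
    simp only [G, mul_add, mul_one, mul_smul_comm, hmul, ← sq, smul_smul]
    match_scalars <;> field_simp
    ring
  have hF (s : ℝ) : HasDerivAt (fun s : ℝ => NormedSpace.exp (s • (-a)) * G s) 0 s := by
    refine ((hasDerivAt_exp_smul_const (-a) s).mul (hG s)).congr_deriv ?_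
    simp [mul_assoc]
  have hconst := is_const_of_deriv_eq_zero (fun s => (hF s).differentiableAt)
    (fun s => (hF s).deriv) s 0
  have hone : NormedSpace.exp (s • (-a)) * G s = 1 := by
    rw [hconst]
    simp [G]
  let _ : NormedAlgebra ℚ 𝔸 := NormedAlgebra.restrictScalars ℚ ℝ 𝔸
  have hinv : NormedSpace.exp (s • a) * NormedSpace.exp (s • (-a)) = 1 := by
    rw [← NormedSpace.exp_add_of_commute]
    · simp
    · exact ((Commute.refl a).neg_right.smul_left s).smul_right s
  calc NormedSpace.exp (s • a)
      = NormedSpace.exp (s • a) * (NormedSpace.exp (s • (-a)) * G s) := by rw [hone, mul_one]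
    _ = G s := by rw [← mul_assoc, hinv, one_mul]

lemma exists_norm_exp_smul_le_of_pow_three_eq {𝔸 : Type*} [NormedRing 𝔸] [NormedAlgebra ℝ 𝔸]
    [CompleteSpace 𝔸] {a : 𝔸} {θ : ℝ} (hθ : θ ≠ 0) (ha : a ^ 3 = -(θ ^ 2) • a) :
    ∃ B : ℝ, ∀ s : ℝ, ‖NormedSpace.exp (s • a)‖ ≤ B := by
  refine ⟨‖(1 : 𝔸)‖ + 1 / |θ| * ‖a‖ + 2 / θ ^ 2 * ‖a ^ 2‖, fun s => ?_⟩
  rw [exp_smul_of_pow_three_eq hθ ha]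
  refine (norm_add₃_le).trans ?_
  rw [norm_smul, norm_smul, Real.norm_eq_abs, Real.norm_eq_abs, abs_div, abs_div,
    abs_of_nonneg (sq_nonneg θ)]
  have hcos : |1 - Real.cos (θ * s)| ≤ 2 := by
    rw [abs_le]
    constructor <;> linarith [Real.neg_one_le_cos (θ * s), Real.cos_le_one (θ * s)]
  gcongr
  exact Real.abs_sin_le_one _

lemma not_tendsto_exp_smul_atTop_of_pow_three_eq {𝔸 : Type*} [NormedRing 𝔸] [NormedAlgebra ℝ 𝔸]
    [CompleteSpace 𝔸] {a : 𝔸} {θ : ℝ} (hθ : 0 < θ) (ha : a ^ 3 = -(θ ^ 2) • a) (ha₀ : a ≠ 0)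
    (L : 𝔸) : ¬ Tendsto (fun s : ℝ => NormedSpace.exp (s • a)) atTop (𝓝 L) := by
  intro hL
  have hperiod (c : ℝ) : Tendsto (fun k : ℕ => (c + k * (2 * Real.pi)) / θ) atTop atTop :=
    (tendsto_atTop_add_const_left _ c
      (tendsto_natCast_atTop_atTop.atTop_mul_const Real.two_pi_pos)).atTop_div_const hθ
  have hlim (c : ℝ) :
      1 + (Real.sin c / θ) • a + ((1 - Real.cos c) / θ ^ 2) • a ^ 2 = L := by
    refine tendsto_nhds_unique ?_ (hL.comp (hperiod c))
    refine tendsto_const_nhds.congr fun k => ?_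
    rw [Function.comp_apply, exp_smul_of_pow_three_eq hθ.ne' ha, mul_div_cancel₀ _ hθ.ne',
      Real.sin_add_nat_mul_two_pi, Real.cos_add_nat_mul_two_pi]
  have hsq : ((1 - -1) / θ ^ 2) • a ^ 2 = 0 := by
    have h := (hlim Real.pi).trans (hlim 0).symm
    simpa using h
  have ha₂ : a ^ 2 = 0 := (smul_eq_zero.mp hsq).resolve_left (by positivity)
  have ha₃ : -(θ ^ 2) • a = 0 := by rw [← ha, pow_succ, ha₂, zero_mul]
  exact ha₀ ((smul_eq_zero.mp ha₃).resolve_left (by simp [hθ.ne']))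

lemma wedge_apply (v w x : E n) : wedge v w x = mink v x • w - mink w x • v := rfl

lemma mink_sub_right (v x y : E n) : mink v (x - y) = mink v x - mink v y := by
  rw [sub_eq_add_neg, mink_add_right, ← neg_one_smul ℝ y, mink_smul_right]
  ring

lemma mink_sub_left (x y v : E n) : mink (x - y) v = mink x v - mink y v := by
  rw [mink_comm, mink_sub_right, mink_comm v x, mink_comm v y]

lemma wedge_pow_three (v w : E n) :
    wedge v w ^ 3 = -(mink v v * mink w w - mink v w ^ 2) • wedge v w := by
  ext1 x
  simp only [pow_succ, pow_zero, one_mul, mul_apply_eq_comp,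
    smul_apply, wedge_apply, mink_sub_right, mink_smul_right, mink_comm w v]
  module

lemma wedge_smul_self (c : ℝ) (w : E n) : wedge (c • w) w = 0 := by
  ext1 x
  rw [wedge_apply, mink_smul_left, smul_smul, mul_comm, sub_self, zero_apply]

/-- The Gram determinant of a spanning pair of a positive definite plane is positive. -/
lemma gram_pos_of_wedge_ne_zero {v w : E n} (hvw : wedge v w ≠ 0)
    (hpos : ∀ x : E n, x ∈ Submodule.span ℝ {v, w} → x ≠ 0 → 0 < mink x x) :
    0 < mink v v * mink w w - mink v w ^ 2 := by
  have hv : v ∈ Submodule.span ℝ {v, w} := Submodule.subset_span (by simp)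
  have hw : w ∈ Submodule.span ℝ {v, w} := Submodule.subset_span (by simp)
  have hw₀ : w ≠ 0 := by
    rintro rfl
    refine hvw ?_
    ext1 x
    have h : mink 0 x = 0 := by simp [mink]
    simp [wedge_apply, h]
  have hww := hpos w hw hw₀
  have hx := hpos (mink w w • v - mink v w • w)
    (Submodule.sub_mem _ (Submodule.smul_mem _ _ hv) (Submodule.smul_mem _ _ hw)) <| by
      intro h
      have hvc : v = ((mink w w)⁻¹ * mink v w) • w := by
        rw [mul_smul, ← sub_eq_zero.mp h, inv_smul_smul₀ hww.ne']
      exact hvw (by rw [hvc, wedge_smul_self])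
  simp only [mink_sub_left, mink_sub_right, mink_smul_left, mink_smul_right, mink_comm w v] at hx
  refine pos_of_mul_pos_right (a := mink w w) ?_ hww.le
  linarith

/-- Proposition 3.1, spacelike case: bounded but no limit. -/
theorem stmt2 {n : ℕ} (v w : E n) (hvw : wedge v w ≠ 0)
    (hpos : ∀ x : E n, x ∈ Submodule.span ℝ {v, w} → x ≠ 0 → 0 < mink x x) :
    (∃ B : ℝ, ∀ s : ℝ, ‖NormedSpace.exp (s • wedge v w)‖ ≤ B) ∧
    ∀ p : ℝ, 0 < p →
      ¬ ∃ L : E n →L[ℝ] E n,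
        Tendsto (fun t : ℝ => NormedSpace.exp ((-Real.log (t / p)) • wedge v w))
          (𝓝[>] 0) (𝓝 L) := by
  have hgram := gram_pos_of_wedge_ne_zero hvw hpos
  have hθ := Real.sqrt_pos.mpr hgram
  have hcube := wedge_pow_three v w
  rw [← Real.sq_sqrt hgram.le] at hcube
  refine ⟨exists_norm_exp_smul_le_of_pow_three_eq hθ.ne' hcube, fun p hp ⟨L, hL⟩ => ?_⟩
  refine not_tendsto_exp_smul_atTop_of_pow_three_eq hθ hcube hvw L ?_
  have hsub : Tendsto (fun s : ℝ => p * Real.exp (-s)) atTop (𝓝[>] 0) := by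
    refine tendsto_nhdsWithin_iff.mpr ⟨?_, Eventually.of_forall fun s => ?_⟩
    · simpa using Real.tendsto_exp_neg_atTop_nhds_zero.const_mul p
    · exact mul_pos hp (Real.exp_pos _)
  refine (hL.comp hsub).congr fun s => ?_
  rw [Function.comp_apply, mul_div_cancel_left₀ _ hp.ne', Real.log_exp, neg_neg]
end
end
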